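/- For every real x with 0 < x < 20, the series ∑_{n=1}^∞ λ(n)·n·f(2πn²/x) is strictly positive, where λ is the Liouville function and f(y) = (1/y)∫_y^∞ e^{-t}/t dt. -/

import Mathlib

/-!
Write `E y = ∫_y^∞ e^{-t}/t dt` and `a = 2π/x`, so `a > 3/10` because `x < 20`. The `n`-th term
of the series is `λ(n) E(a n²) / (a n)`, and the term `n = 1`, equal to `f a > 0`, dominates the
absolute sum of all the others.

Translating the variable of integration gives `E (y + h) ≤ e^{-h} E y` for `h ≥ 0`
(`expInt_add_le`). Since `n² - 1 ≥ 3 (n - 1)` and `e^{-3a} ≤ 1 / (1 + 3a) ≤ 3/5`, for `n ≥ 2` the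
`n`-th term is at most `(1/2) (3/5)^{n-1} f a` in absolute value (`abs_term_le`), and these bounds
sum to `(3/4) f a`.
-/

noncomputable def f (y : ℝ) : ℝ := (1 / y) * ∫ t in Set.Ioi y, Real.exp (-t) / t

noncomputable def liouville (n : ℕ) : ℝ := (-1) ^ (ArithmeticFunction.cardFactors n)

open MeasureTheory Set in
lemma integrableOn_exp_neg_div {y : ℝ} (hy : 0 < y) :
    IntegrableOn (fun t : ℝ => Real.exp (-t) / t) (Ioi y) := by
  have h1 : IntegrableOn (fun t : ℝ => Real.exp (-t) / y) (Ioi y) :=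
    (integrableOn_exp_neg_Ioi y).div_const y
  refine Integrable.mono' h1 ?_ ?_
  · exact (Measurable.aestronglyMeasurable (by fun_prop))
  · refine (ae_restrict_iff' measurableSet_Ioi).2 (Filter.Eventually.of_forall fun t ht => ?_)
    have ht' : y < t := ht
    have : 0 < t := hy.trans ht'
    rw [Real.norm_of_nonneg (by positivity)]
    gcongr

open MeasureTheory Set in
lemma expInt_pos {y : ℝ} (hy : 0 < y) : 0 < ∫ t in Ioi y, Real.exp (-t) / t := by
  have hpos : ∀ t ∈ Ioi y, 0 < Real.exp (-t) / t := fun t ht =>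
    div_pos (Real.exp_pos _) (hy.trans ht)
  rw [setIntegral_pos_iff_support_of_nonneg_ae
    ((ae_restrict_iff' measurableSet_Ioi).2 (Filter.Eventually.of_forall fun t ht => (hpos t ht).le))
    (integrableOn_exp_neg_div hy)]
  have : Function.support (fun t : ℝ => Real.exp (-t) / t) ∩ Ioi y = Ioi y :=
    inter_eq_right.2 fun t ht => (hpos t ht).ne'
  rw [this]
  simp

open MeasureTheory Set in
lemma expInt_add_le {y h : ℝ} (hy : 0 < y) (hh : 0 ≤ h) :
    ∫ t in Ioi (y + h), Real.exp (-t) / t ≤ Real.exp (-h) * ∫ t in Ioi y, Real.exp (-t) / t := by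
  have hmp : MeasurePreserving (fun t : ℝ => t + h) volume volume :=
    measurePreserving_add_right volume h
  have hemb : MeasurableEmbedding (fun t : ℝ => t + h) := measurableEmbedding_addRight h
  have hpre : (fun t : ℝ => t + h) ⁻¹' Ioi (y + h) = Ioi y := by ext; simp
  rw [← hmp.setIntegral_preimage_emb hemb, hpre, ← integral_const_mul]
  have hint : IntegrableOn (fun t : ℝ => Real.exp (-(t + h)) / (t + h)) (Ioi y) := by
    have := (hmp.integrableOn_comp_preimage hemb).2
      (integrableOn_exp_neg_div (add_pos_of_pos_of_nonneg hy hh))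
    rwa [hpre] at this
  refine setIntegral_mono_on hint ((integrableOn_exp_neg_div hy).const_mul _) measurableSet_Ioi
    fun t ht => ?_
  have ht0 : 0 < t := hy.trans ht
  rw [neg_add, Real.exp_add, mul_comm, mul_div_assoc]
  gcongr
  linarith

lemma f_pos {y : ℝ} (hy : 0 < y) : 0 < f y :=
  mul_pos (by positivity) (expInt_pos hy)

lemma abs_liouville (n : ℕ) : |liouville n| = 1 := by simp [liouville]

/-- Geometric domination of the terms of index `n + 2` by the term of index `1`. -/
lemma abs_term_le {a : ℝ} (ha : 3 / 10 ≤ a) (n : ℕ) :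
    |liouville (n + 2) * ((n + 2 : ℕ) : ℝ) * f (a * ((n + 2 : ℕ) : ℝ) ^ 2)| ≤
      3 / 10 * f a * (3 / 5) ^ n := by
  have ha0 : 0 < a := by linarith
  have hn : (0 : ℝ) ≤ n := n.cast_nonneg
  rw [abs_mul, abs_mul, abs_liouville, one_mul, Nat.abs_cast, abs_of_pos (f_pos (by positivity))]
  push_cast
  set E := ∫ t in Set.Ioi a, Real.exp (-t) / t with hE
  have hEpos : 0 < E := expInt_pos ha0
  have hexp : Real.exp (-(3 * a)) ≤ 3 / 5 := by
    have h1 := Real.add_one_le_exp (3 * a)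
    rw [Real.exp_neg, inv_le_comm₀ (Real.exp_pos _) (by norm_num)]
    linarith
  have hdecay : ∫ t in Set.Ioi (a * ((n : ℝ) + 2) ^ 2), Real.exp (-t) / t ≤
      (3 / 5) ^ (n + 1) * E := by
    have h1 := expInt_add_le (h := a * (((n : ℝ) + 2) ^ 2 - 1)) ha0
      (mul_nonneg ha0.le (by nlinarith))
    rw [show a + a * (((n : ℝ) + 2) ^ 2 - 1) = a * ((n : ℝ) + 2) ^ 2 by ring] at h1
    refine h1.trans (mul_le_mul_of_nonneg_right ?_ hEpos.le)
    calc Real.exp (-(a * (((n : ℝ) + 2) ^ 2 - 1)))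
        ≤ Real.exp (((n + 1 : ℕ) : ℝ) * -(3 * a)) := by
          apply Real.exp_le_exp.2
          push_cast
          nlinarith [mul_nonneg ha0.le (mul_nonneg hn (add_nonneg hn zero_le_one))]
      _ = Real.exp (-(3 * a)) ^ (n + 1) := Real.exp_nat_mul _ _
      _ ≤ (3 / 5) ^ (n + 1) := by gcongr
  unfold f
  rw [← hE]
  calc ((n : ℝ) + 2) * (1 / (a * ((n : ℝ) + 2) ^ 2) *
        ∫ t in Set.Ioi (a * ((n : ℝ) + 2) ^ 2), Real.exp (-t) / t)
      ≤ ((n : ℝ) + 2) * (1 / (a * ((n : ℝ) + 2) ^ 2) * ((3 / 5) ^ (n + 1) * E)) := by gcongr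
    _ = 1 / ((n : ℝ) + 2) * (1 / a * ((3 / 5) ^ (n + 1) * E)) := by field_simp
    _ ≤ 1 / 2 * (1 / a * ((3 / 5) ^ (n + 1) * E)) := by gcongr; linarith
    _ = 3 / 10 * (1 / a * E) * (3 / 5) ^ n := by ring

open Real in
theorem liouville_sum_pos_small (x : ℝ) (hx0 : 0 < x) (hx20 : x < 20) :
    0 < ∑' n : ℕ, liouville n * (n : ℝ) * f (2 * π * (n : ℝ) ^ 2 / x) := by
  have ha : 3 / 10 ≤ 2 * π / x := by
    rw [le_div_iff₀ hx0]
    linarith [Real.pi_gt_three]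
  set a := 2 * π / x with ha_def
  have hrw : ∀ n : ℕ, 2 * π * (n : ℝ) ^ 2 / x = a * (n : ℝ) ^ 2 := fun n => by
    rw [ha_def]; ring
  simp_rw [hrw]
  have hfa : 0 < f a := f_pos (by linarith)
  have hgeo : HasSum (fun n : ℕ => 3 / 10 * f a * (3 / 5 : ℝ) ^ n) (3 / 10 * f a * (5 / 2)) := by
    have := (hasSum_geometric_of_lt_one (r := (3 / 5 : ℝ)) (by norm_num) (by norm_num)).mul_left
      (3 / 10 * f a)
    rwa [show (1 - 3 / 5 : ℝ)⁻¹ = 5 / 2 by norm_num] at this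
  have hbound := tsum_of_norm_bounded hgeo
    (f := fun n : ℕ => liouville (n + 2) * ((n + 2 : ℕ) : ℝ) * f (a * ((n + 2 : ℕ) : ℝ) ^ 2))
    (abs_term_le ha)
  have hsum : Summable fun n : ℕ => liouville n * (n : ℝ) * f (a * (n : ℝ) ^ 2) :=
    (summable_nat_add_iff 2).1 (Summable.of_norm_bounded hgeo.summable (abs_term_le ha))
  rw [← hsum.sum_add_tsum_nat_add 2]
  have hone : ∑ n ∈ Finset.range 2, liouville n * (n : ℝ) * f (a * (n : ℝ) ^ 2) = f a := by
    simp [Finset.sum_range_succ, liouville]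
  rw [hone]
  have := (abs_le.1 hbound).1
  linarith
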